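/- Let f, g be real-valued differentiable monotonic functions on [a,b] with f' also monotonic, |f'(t)| ≤ θ < 1 for all t in [a,b], and |g(t)|, |g'(t)| ≪ 1. Then Σ_{a < n ≤ b} g(n) e(f(n)) = ∫_a^b g(t) e(f(t)) dt + O(1/(1−θ)). -/

import Mathlib

/-!
On a unit interval `[n, n + 1]` the phase `f` is close to its chord, of slope `α = f (n + 1) - f n`;
the error is at most the variation of `f'` there, and these variations add up to at most `2θ`. For a
linear phase the integral is explicit and
`e(f(n)) - ∫ e(f(n) + α(t - n)) dt = φ(α) (e(f(n + 1)) - e(f(n)))`, where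
`φ(α) = 1 / (e(α) - 1) - 1 / (2πiα) = -1/2 - (i/2) (cot(πα) - 1/(πα))`. The slopes are values of the
monotone function `f'` at increasing points and `cot y - 1/y` is decreasing on `(-π, π)`, so both
the size and the total variation of `φ(α)` are at most `1 / (1 - θ)`, and summation by parts
finishes the proof.
-/

section

open Set MeasureTheory Real
open scoped FourierTransform

/-! ### The regular part of the cotangent -/

theorem mul_cos_le_sin {y : ℝ} (hy0 : 0 ≤ y) (hy : y ≤ π) : y * cos y ≤ sin y := by
  rcases lt_or_ge y (π / 2) with h | h
  · rw [← le_div_iff₀ (cos_pos_of_mem_Ioo ⟨by linarith, h⟩), ← tan_eq_sin_div_cos]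
    exact le_tan hy0 h
  · have hcos : cos y ≤ 0 := cos_nonpos_of_pi_div_two_le_of_le h (by linarith)
    exact (mul_nonpos_of_nonneg_of_nonpos hy0 hcos).trans (sin_nonneg_of_nonneg_of_le_pi hy0 hy)

/-- The cotangent with its pole at the origin removed. Since `Real.cot 0 = 0` and `0⁻¹ = 0` in
Lean, the value at the removable singularity is the correct one, `0`. -/
noncomputable def cotRegularPart (y : ℝ) : ℝ := cot y - y⁻¹

theorem cotRegularPart_neg (y : ℝ) : cotRegularPart (-y) = -cotRegularPart y := by
  simp only [cotRegularPart, cot_eq_cos_div_sin, cos_neg, sin_neg, div_neg, inv_neg]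
  ring

theorem cotRegularPart_nonpos {y : ℝ} (hy : y ∈ Ico 0 π) : cotRegularPart y ≤ 0 := by
  rcases hy.1.eq_or_lt with rfl | hy0
  · simp [cotRegularPart, cot_eq_cos_div_sin]
  · rw [cotRegularPart, sub_nonpos, cot_eq_cos_div_sin,
      div_le_iff₀ (sin_pos_of_pos_of_lt_pi hy0 hy.2), ← div_eq_inv_mul, le_div_iff₀' hy0]
    exact mul_cos_le_sin hy.1 hy.2.le

theorem hasDerivAt_cotRegularPart {y : ℝ} (hy : sin y ≠ 0) :
    HasDerivAt cotRegularPart ((y ^ 2)⁻¹ - (sin y ^ 2)⁻¹) y := by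
  have hy0 : y ≠ 0 := by rintro rfl; exact hy sin_zero
  have hcot : cotRegularPart = fun z => cos z / sin z - z⁻¹ :=
    funext fun z => by rw [cotRegularPart, cot_eq_cos_div_sin]
  rw [hcot]
  refine (((hasDerivAt_cos y).div (hasDerivAt_sin y) hy).sub (hasDerivAt_inv hy0)).congr_deriv ?_
  have hsq : -sin y * sin y - cos y * cos y = -1 := by linarith [sin_sq_add_cos_sq y]
  rw [hsq]
  ring

theorem cotRegularPart_antitoneOn_Ioo_zero_pi : AntitoneOn cotRegularPart (Ioo 0 π) := by
  have hsin {y : ℝ} (hy : y ∈ Ioo 0 π) : 0 < sin y := sin_pos_of_mem_Ioo hy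
  refine antitoneOn_of_hasDerivWithinAt_nonpos (convex_Ioo 0 π)
    (f' := fun y => (y ^ 2)⁻¹ - (sin y ^ 2)⁻¹)
    (fun y hy => (hasDerivAt_cotRegularPart (hsin hy).ne').continuousAt.continuousWithinAt) ?_ ?_
  all_goals rw [interior_Ioo]; intro y hy
  · exact (hasDerivAt_cotRegularPart (hsin hy).ne').hasDerivWithinAt
  · have := hsin hy
    have := sin_le hy.1.le
    rw [sub_nonpos]
    gcongr

theorem cotRegularPart_antitoneOn : AntitoneOn cotRegularPart (Ioo (-π) π) := by
  intro y hy z hz hyz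
  have hneg (w : ℝ) : cotRegularPart w = -cotRegularPart (-w) := by rw [cotRegularPart_neg, neg_neg]
  rcases lt_or_ge 0 y with hy0 | hy0
  · exact cotRegularPart_antitoneOn_Ioo_zero_pi ⟨hy0, hy.2⟩ ⟨hy0.trans_le hyz, hz.2⟩ hyz
  rcases lt_or_ge z 0 with hz0 | hz0
  · rw [hneg y, hneg z, neg_le_neg_iff]
    exact cotRegularPart_antitoneOn_Ioo_zero_pi ⟨by linarith, by linarith [hz.1]⟩
      ⟨by linarith, by linarith [hy.1]⟩ (by linarith)
  · calc cotRegularPart z ≤ 0 := cotRegularPart_nonpos ⟨hz0, hz.2⟩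
      _ ≤ -cotRegularPart (-y) :=
        neg_nonneg.mpr (cotRegularPart_nonpos ⟨by linarith, by linarith [hy.1]⟩)
      _ = cotRegularPart y := (hneg y).symm

theorem neg_cotRegularPart_pi_mul_le {θ : ℝ} (hθ0 : 0 ≤ θ) (hθ : θ < 1) :
    -cotRegularPart (π * θ) ≤ 1 / (1 - θ) := by
  have hpi := pi_gt_three
  have hθ1 : 0 < 1 - θ := sub_pos.mpr hθ
  rcases le_or_gt θ (1 / 2) with hhalf | hhalf
  · have hanti : cotRegularPart (π / 2) ≤ cotRegularPart (π * θ) :=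
      cotRegularPart_antitoneOn ⟨by nlinarith, by nlinarith⟩ ⟨by linarith, by linarith⟩
        (by nlinarith)
    have hval : cotRegularPart (π / 2) = -(2 / π) := by
      simp [cotRegularPart, cot_eq_cos_div_sin]
    calc -cotRegularPart (π * θ) ≤ 2 / π := by linarith
      _ ≤ 1 := by rw [div_le_one pi_pos]; linarith
      _ ≤ 1 / (1 - θ) := by rw [le_div_iff₀ hθ1]; linarith
  · -- Near `π` the bound comes from `cot (π - z) = -cot z` and `cot z ≤ 1 / z`.
    have hreflect : -cot (π * θ) = cot (π * (1 - θ)) := by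
      rw [mul_one_sub, cot_eq_cos_div_sin, cot_eq_cos_div_sin, cos_pi_sub, sin_pi_sub, neg_div]
    have hcot : cot (π * (1 - θ)) ≤ (π * (1 - θ))⁻¹ :=
      sub_nonpos.mp (cotRegularPart_nonpos ⟨by positivity, by nlinarith⟩)
    have hinv : (π * θ)⁻¹ ≤ (π * (1 - θ))⁻¹ := by gcongr; linarith
    calc -cotRegularPart (π * θ) = cot (π * (1 - θ)) + (π * θ)⁻¹ := by
          rw [cotRegularPart, ← hreflect]; ring
      _ ≤ 2 / π * (1 / (1 - θ)) := by
          refine (add_le_add hcot hinv).trans_eq ?_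
          rw [mul_inv]; ring
      _ ≤ 1 / (1 - θ) := by
          refine mul_le_of_le_one_left (by positivity) ?_
          rw [div_le_one pi_pos]; linarith

theorem abs_cotRegularPart_pi_mul_le {x θ : ℝ} (hθ : θ < 1) (hx : |x| ≤ θ) :
    |cotRegularPart (π * x)| ≤ 1 / (1 - θ) := by
  have hpi := pi_pos
  have hθ0 : 0 ≤ θ := (abs_nonneg x).trans hx
  have hmem {y : ℝ} (hy : |y| ≤ θ) : π * y ∈ Ioo (-π) π := by
    obtain ⟨h1, h2⟩ := abs_le.mp hy
    constructor <;> nlinarith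
  have hθθ : |θ| ≤ θ := (abs_of_nonneg hθ0).le
  obtain ⟨hxl, hxr⟩ := abs_le.mp hx
  have hlower : cotRegularPart (π * θ) ≤ cotRegularPart (π * x) :=
    cotRegularPart_antitoneOn (hmem hx) (hmem hθθ) (by gcongr)
  have hupper : cotRegularPart (π * x) ≤ cotRegularPart (π * -θ) :=
    cotRegularPart_antitoneOn (hmem (by rwa [abs_neg])) (hmem hx) (by gcongr)
  rw [mul_neg, cotRegularPart_neg] at hupper
  exact (abs_le.mpr ⟨by linarith, hupper⟩).trans (neg_cotRegularPart_pi_mul_le hθ0 hθ)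

/-! ### The additive character on a linear phase -/

theorem fourierChar_eq_exp (x : ℝ) : (𝐞 x : ℂ) = Complex.exp (2 * π * Complex.I * x) := by
  rw [fourierChar_apply]; push_cast; ring_nf

theorem continuous_coe_fourierChar : Continuous fun x => (𝐞 x : ℂ) :=
  continuous_subtype_val.comp continuous_fourierChar

theorem norm_fourierChar_sub_le (x y : ℝ) : ‖(𝐞 x : ℂ) - 𝐞 y‖ ≤ 2 * π * |x - y| := by
  have hfactor : (𝐞 x : ℂ) - 𝐞 y = 𝐞 y * (Complex.exp (Complex.I * (2 * π * (x - y) : ℝ)) - 1) := by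
    rw [mul_sub, mul_comm Complex.I, ← fourierChar_apply, ← Circle.coe_mul,
      ← AddChar.map_add_eq_mul, add_sub_cancel, mul_one]
  calc ‖(𝐞 x : ℂ) - 𝐞 y‖ = ‖Complex.exp (Complex.I * (2 * π * (x - y) : ℝ)) - 1‖ := by
        rw [hfactor, norm_mul, Circle.norm_coe, one_mul]
    _ ≤ ‖2 * π * (x - y)‖ := norm_exp_I_mul_ofReal_sub_one_le
    _ = 2 * π * |x - y| := by rw [norm_eq_abs, abs_mul, abs_of_pos two_pi_pos]

theorem norm_mul_fourierChar_sub_le (z w : ℂ) (x y : ℝ) :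
    ‖z * 𝐞 x - w * 𝐞 y‖ ≤ ‖z - w‖ + 2 * π * ‖z‖ * |x - y| := by
  have hsplit : z * 𝐞 x - w * 𝐞 y = (z - w) * 𝐞 y + z * (𝐞 x - 𝐞 y) := by ring
  calc ‖z * 𝐞 x - w * 𝐞 y‖ ≤ ‖z - w‖ * ‖(𝐞 y : ℂ)‖ + ‖z‖ * ‖(𝐞 x : ℂ) - 𝐞 y‖ := by
        rw [hsplit, ← norm_mul, ← norm_mul]; exact norm_add_le _ _
    _ ≤ ‖z - w‖ * 1 + ‖z‖ * (2 * π * |x - y|) := by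
        gcongr
        · exact (Circle.norm_coe _).le
        · exact norm_fourierChar_sub_le x y
    _ = ‖z - w‖ + 2 * π * ‖z‖ * |x - y| := by ring

theorem fourierChar_sub_one (x : ℝ) :
    (𝐞 x : ℂ) - 1 = 2 * Complex.I * sin (π * x) * (cos (π * x) + sin (π * x) * Complex.I) := by
  have hdouble : ((2 * π * x : ℝ) : ℂ) = 2 * (π * x : ℝ) := by push_cast; ring
  rw [fourierChar_apply, Complex.exp_mul_I, hdouble, Complex.cos_two_mul, Complex.sin_two_mul,
    Complex.cos_sq', ← Complex.ofReal_cos, ← Complex.ofReal_sin]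
  linear_combination -2 * (sin (π * x) : ℂ) ^ 2 * Complex.I_sq

/-- The function `φ(x) = 1 / (e(x) - 1) - 1 / (2πix)`, extended continuously over `x = 0`. It is
written through the cotangent so that its variation and size can be read off from those of
`cotRegularPart`. -/
noncomputable def phaseCoeff (x : ℝ) : ℂ := -(1 / 2) - Complex.I / 2 * cotRegularPart (π * x)

theorem integral_fourierChar_mul {x : ℝ} (hx : x ≠ 0) :
    ∫ s in (0 : ℝ)..1, (𝐞 (x * s) : ℂ) = (𝐞 x - 1) / (2 * π * Complex.I * x) := by
  have hc : 2 * π * Complex.I * (x : ℂ) ≠ 0 := by simp [pi_ne_zero, hx]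
  simpa [fourierChar_eq_exp, mul_assoc] using integral_exp_mul_complex (a := 0) (b := 1) hc

theorem one_sub_integral_fourierChar_mul {x : ℝ} (hx : |x| < 1) :
    1 - ∫ s in (0 : ℝ)..1, (𝐞 (x * s) : ℂ) = phaseCoeff x * (𝐞 x - 1) := by
  rcases eq_or_ne x 0 with rfl | hx0
  · simp
  obtain ⟨hx1, hx2⟩ := abs_lt.mp hx
  have hpi := pi_pos
  have hsin : sin (π * x) ≠ 0 := by
    rw [Ne, sin_eq_zero_iff_of_lt_of_lt (by nlinarith) (by nlinarith)]
    exact mul_ne_zero pi_ne_zero hx0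
  have hcot : (-(1 / 2) - Complex.I / 2 * cot (π * x)) * (𝐞 x - 1) = 1 := by
    have hsinc : (sin (π * x) : ℂ) ≠ 0 := by exact_mod_cast hsin
    have hcs : (sin (π * x) : ℂ) ^ 2 + (cos (π * x) : ℂ) ^ 2 = 1 := by
      exact_mod_cast sin_sq_add_cos_sq (π * x)
    rw [fourierChar_sub_one, cot_eq_cos_div_sin, Complex.ofReal_div]
    field_simp
    linear_combination hcs - Complex.I_sq * ((cos (π * x) : ℂ) ^ 2 + (sin (π * x) : ℂ) ^ 2 +
      Complex.I * sin (π * x) * cos (π * x))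
  have hpole : Complex.I / 2 * ((π * x : ℝ) : ℂ)⁻¹ = -1 / (2 * π * Complex.I * x) := by
    push_cast
    field_simp
    simp only [Complex.I_sq]
    ring
  calc 1 - ∫ s in (0 : ℝ)..1, (𝐞 (x * s) : ℂ)
      = (-(1 / 2) - Complex.I / 2 * cot (π * x)) * (𝐞 x - 1) +
          -1 / (2 * π * Complex.I * x) * (𝐞 x - 1) := by
        rw [hcot, integral_fourierChar_mul hx0]; ring
    _ = phaseCoeff x * (𝐞 x - 1) := by
        rw [← hpole, phaseCoeff, cotRegularPart]; push_cast; ring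

theorem norm_phaseCoeff_sub (x y : ℝ) :
    ‖phaseCoeff x - phaseCoeff y‖ = 1 / 2 * |cotRegularPart (π * x) - cotRegularPart (π * y)| := by
  have hsub : phaseCoeff x - phaseCoeff y =
      -(Complex.I / 2) * (cotRegularPart (π * x) - cotRegularPart (π * y) : ℝ) := by
    simp only [phaseCoeff]; push_cast; ring
  rw [hsub, norm_mul, Complex.norm_real, norm_eq_abs]
  simp

theorem norm_phaseCoeff_le {x θ : ℝ} (hθ : θ < 1) (hx : |x| ≤ θ) :
    ‖phaseCoeff x‖ ≤ 1 / (1 - θ) := by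
  have hone : 1 ≤ 1 / (1 - θ) := by
    rw [le_div_iff₀ (by linarith)]; linarith [(abs_nonneg x).trans hx]
  calc ‖phaseCoeff x‖ ≤ ‖(-(1 / 2) : ℂ)‖ + ‖Complex.I / 2‖ * |cotRegularPart (π * x)| := by
        rw [← norm_eq_abs, ← Complex.norm_real, ← norm_mul]; exact norm_sub_le _ _
    _ = 1 / 2 + 1 / 2 * |cotRegularPart (π * x)| := by simp
    _ ≤ 1 / (1 - θ) := by linarith [abs_cotRegularPart_pi_mul_le hθ hx]

/-! ### Total variation -/

section Variation

variable {α E : Type*} [LinearOrder α]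

theorem eVariationOn_Icc_le_of_abs_le {h : α → ℝ} {a b : α} {M : ℝ}
    (hh : MonotoneOn h (Icc a b) ∨ AntitoneOn h (Icc a b)) (hM : ∀ t ∈ Icc a b, |h t| ≤ M) :
    eVariationOn h (Icc a b) ≤ ENNReal.ofReal (2 * M) := by
  rcases lt_or_ge b a with hba | hab
  · simp [Icc_eq_empty hba.not_ge]
  have of_monotoneOn {p : α → ℝ} (hp : MonotoneOn p (Icc a b)) (hpM : ∀ t ∈ Icc a b, |p t| ≤ M) :
      eVariationOn p (Icc a b) ≤ ENNReal.ofReal (2 * M) := by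
    have ha := left_mem_Icc.mpr hab
    have hb := right_mem_Icc.mpr hab
    rw [← inter_self (Icc a b), hp.eVariationOn_eq ha hb]
    exact ENNReal.ofReal_le_ofReal
      (by linarith [neg_le_of_abs_le (hpM a ha), le_of_abs_le (hpM b hb)])
  rcases hh with hh | hh
  · exact of_monotoneOn hh hM
  · have hneg : eVariationOn (-h) (Icc a b) = eVariationOn h (Icc a b) := by
      simp only [eVariationOn, Pi.neg_apply, edist_neg_neg]
    rw [← hneg]
    exact of_monotoneOn hh.neg fun t ht => by rw [Pi.neg_apply, abs_neg]; exact hM t ht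

theorem sum_dist_le_toReal_eVariationOn [PseudoMetricSpace E] {h : α → E} {s : Set α}
    (hh : BoundedVariationOn h s) {n : ℕ} {u : ℕ → α} (hu : MonotoneOn u (Iic n))
    (hus : ∀ i ≤ n, u i ∈ s) :
    ∑ i ∈ Finset.range n, dist (h (u (i + 1))) (h (u i)) ≤ (eVariationOn h s).toReal := by
  refine (ENNReal.ofReal_le_iff_le_toReal hh).mp ?_
  rw [ENNReal.ofReal_sum_of_nonneg fun _ _ => dist_nonneg]
  simpa only [edist_dist] using eVariationOn.sum_le_of_monotoneOn_Iic (f := h) hu hus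

theorem sum_toReal_eVariationOn_Icc [PseudoEMetricSpace E] {h : α → E} {I : ℕ → α}
    (hI : Monotone I) {n : ℕ} (hh : BoundedVariationOn h (Icc (I 0) (I n))) :
    ∑ i ∈ Finset.range n, (eVariationOn h (Icc (I i) (I (i + 1)))).toReal =
      (eVariationOn h (Icc (I 0) (I n))).toReal := by
  rw [← eVariationOn.sum' h hI, ENNReal.toReal_sum]
  intro i hi
  exact hh.mono (Icc_subset_Icc (hI i.zero_le) (hI (Finset.mem_range.mp hi)))

theorem sum_toReal_eVariationOn_Icc_add_natCast [PseudoEMetricSpace E] {h : ℝ → E}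
    {x : ℝ} {n : ℕ} (hh : BoundedVariationOn h (Icc x (x + n))) :
    ∑ k ∈ Finset.range n, (eVariationOn h (Icc (x + k) (x + k + 1))).toReal =
      (eVariationOn h (Icc x (x + n))).toReal := by
  have hI : Monotone fun k : ℕ => x + k := Nat.mono_cast.const_add x
  simpa [add_assoc] using sum_toReal_eVariationOn_Icc hI (n := n) (by simpa using hh)

theorem eVariationOn_ofReal_comp (h : α → ℝ) (s : Set α) :
    eVariationOn (fun t => (h t : ℂ)) s = eVariationOn h s := by
  simp only [eVariationOn, Complex.isometry_ofReal.edist_eq]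

theorem intervalIntegrable_of_boundedVariationOn {g : ℝ → ℂ} {a b : ℝ}
    (hg : BoundedVariationOn g (uIcc a b)) : IntervalIntegrable g volume a b := by
  have of_real {h : ℝ → ℝ} (hh : BoundedVariationOn h (uIcc a b)) :
      IntervalIntegrable h volume a b := by
    obtain ⟨p, q, hp, hq, rfl⟩ := hh.locallyBoundedVariationOn.exists_monotoneOn_sub_monotoneOn
    exact hp.intervalIntegrable.sub hq.intervalIntegrable
  have hre : IntervalIntegrable (fun t => (g t).re) volume a b :=
    of_real (Complex.reCLM.lipschitz.comp_boundedVariationOn hg)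
  have him : IntervalIntegrable (fun t => (g t).im) volume a b :=
    of_real (Complex.imCLM.lipschitz.comp_boundedVariationOn hg)
  rw [intervalIntegrable_iff] at hre him ⊢
  exact Integrable.re_im_iff.mp ⟨hre, him⟩

theorem intervalIntegrable_mul_fourierChar {g : ℝ → ℂ} {f : ℝ → ℝ} {a b : ℝ} (hab : a ≤ b)
    (hg : BoundedVariationOn g (Icc a b)) (hf : ContinuousOn f (Icc a b)) :
    IntervalIntegrable (fun t => g t * 𝐞 (f t)) volume a b := by
  rw [← uIcc_of_le hab] at hg hf
  exact (intervalIntegrable_of_boundedVariationOn hg).mul_continuousOn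
    (continuous_coe_fourierChar.comp_continuousOn hf)

end Variation

/-! ### Summation by parts -/

theorem norm_sum_smul_sub_le {𝕜 E : Type*} [NormedField 𝕜] [NormedAddCommGroup E] [NormedSpace 𝕜 E]
    {u : ℕ → 𝕜} {w : ℕ → E} {W : ℝ} (n : ℕ) (hw : ∀ k, ‖w k‖ ≤ W) :
    ‖∑ k ∈ Finset.range (n + 1), u k • (w (k + 1) - w k)‖ ≤
      2 * W * (‖u n‖ + ∑ k ∈ Finset.range n, ‖u (k + 1) - u k‖) := by
  have hdiff (k : ℕ) : ‖w k - w 0‖ ≤ 2 * W :=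
    (norm_sub_le_of_le (hw k) (hw 0)).trans_eq (two_mul W).symm
  rw [Finset.sum_range_by_parts]
  simp only [Finset.sum_range_sub, Nat.add_sub_cancel]
  calc ‖u n • (w (n + 1) - w 0) -
        ∑ k ∈ Finset.range n, (u (k + 1) - u k) • (w (k + 1) - w 0)‖
      ≤ ‖u n‖ * (2 * W) + ∑ k ∈ Finset.range n, ‖u (k + 1) - u k‖ * (2 * W) := by
        refine norm_sub_le_of_le ?_ (norm_sum_le_of_le _ fun k _ => ?_)
        all_goals
          rw [norm_smul]
          gcongr
          exact hdiff _
    _ = 2 * W * (‖u n‖ + ∑ k ∈ Finset.range n, ‖u (k + 1) - u k‖) := by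
        rw [← Finset.sum_mul]; ring

theorem sum_norm_mul_sub_le {R : Type*} [NormedRing R] {p q : ℕ → R} {A B : ℝ} {n : ℕ}
    (hp : ∀ k ≤ n, ‖p k‖ ≤ A) (hq : ∀ k ≤ n, ‖q k‖ ≤ B) :
    ∑ k ∈ Finset.range n, ‖p (k + 1) * q (k + 1) - p k * q k‖ ≤
      A * ∑ k ∈ Finset.range n, ‖q (k + 1) - q k‖ +
        B * ∑ k ∈ Finset.range n, ‖p (k + 1) - p k‖ := by
  rw [Finset.mul_sum, Finset.mul_sum, ← Finset.sum_add_distrib]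
  refine Finset.sum_le_sum fun k hk => ?_
  have hkn : k + 1 ≤ n := Finset.mem_range.mp hk
  have hsplit : p (k + 1) * q (k + 1) - p k * q k =
      p (k + 1) * (q (k + 1) - q k) + (p (k + 1) - p k) * q k := by noncomm_ring
  rw [hsplit, mul_comm B]
  exact norm_add_le_of_le (norm_mul_le_of_le (hp _ hkn) le_rfl)
    (norm_mul_le_of_le le_rfl (hq _ (by lia)))

theorem sum_norm_phaseCoeff_sub_le {h : ℝ → ℝ} {a b θ : ℝ}
    (hh : MonotoneOn h (Icc a b) ∨ AntitoneOn h (Icc a b)) (hθ : θ < 1)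
    (hhθ : ∀ t ∈ Icc a b, |h t| ≤ θ) {n : ℕ} {u : ℕ → ℝ} (hu : MonotoneOn u (Iic n))
    (hus : ∀ k ≤ n, u k ∈ Icc a b) :
    ∑ k ∈ Finset.range n, ‖phaseCoeff (h (u (k + 1))) - phaseCoeff (h (u k))‖ ≤ 1 / (1 - θ) := by
  set c : ℝ → ℝ := fun t => cotRegularPart (π * h t)
  have hmem : MapsTo (fun t => π * h t) (Icc a b) (Ioo (-π) π) := fun t ht => by
    obtain ⟨h1, h2⟩ := abs_lt.mp ((hhθ t ht).trans_lt hθ)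
    constructor <;> nlinarith [pi_pos]
  have hscale : Monotone (π * · : ℝ → ℝ) := monotone_mul_left_of_nonneg pi_pos.le
  have hc : MonotoneOn c (Icc a b) ∨ AntitoneOn c (Icc a b) :=
    hh.symm.imp
      (fun hh => cotRegularPart_antitoneOn.comp (hscale.comp_antitoneOn hh) hmem)
      (fun hh => cotRegularPart_antitoneOn.comp_MonotoneOn (hscale.comp_monotoneOn hh) hmem)
  have hvar : eVariationOn c (Icc a b) ≤ ENNReal.ofReal (2 * (1 / (1 - θ))) :=
    eVariationOn_Icc_le_of_abs_le hc fun t ht => abs_cotRegularPart_pi_mul_le hθ (hhθ t ht)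
  have hsum : ∑ k ∈ Finset.range n, |c (u (k + 1)) - c (u k)| ≤ 2 * (1 / (1 - θ)) := by
    have : 0 < 1 - θ := sub_pos.mpr hθ
    exact (sum_dist_le_toReal_eVariationOn (ne_top_of_le_ne_top ENNReal.ofReal_ne_top hvar)
      hu hus).trans (ENNReal.toReal_le_of_le_ofReal (by positivity) hvar)
  simp only [norm_phaseCoeff_sub, ← Finset.mul_sum]
  linarith

/-! ### Linearization of the phase on unit intervals -/

theorem exists_mem_Icc_sub_eq_mul {f f' : ℝ → ℝ} {x y : ℝ} (hxy : x ≤ y)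
    (hf : ∀ t ∈ Icc x y, HasDerivWithinAt f (f' t) (Icc x y) t) :
    ∃ ξ ∈ Icc x y, f y - f x = f' ξ * (y - x) := by
  rcases hxy.eq_or_lt with rfl | hlt
  · exact ⟨x, left_mem_Icc.mpr le_rfl, by simp⟩
  obtain ⟨ξ, hξ, hslope⟩ := exists_hasDerivAt_eq_slope f f' hlt
    (fun t ht => (hf t ht).continuousWithinAt)
    (fun t ht => (hf t (Ioo_subset_Icc_self ht)).hasDerivAt (Icc_mem_nhds ht.1 ht.2))
  exact ⟨ξ, Ioo_subset_Icc_self hξ, by rw [hslope, div_mul_cancel₀ _ (sub_pos.mpr hlt).ne']⟩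

theorem abs_linearization_sub_le {f f' : ℝ → ℝ} {x y ξ t : ℝ}
    (hf : ∀ t ∈ Icc x y, HasDerivWithinAt f (f' t) (Icc x y) t)
    (hf' : BoundedVariationOn f' (Icc x y)) (hξ : ξ ∈ Icc x y) (ht : t ∈ Icc x y) :
    |f x + f' ξ * (t - x) - f t| ≤ (eVariationOn f' (Icc x y)).toReal * (t - x) := by
  have hsub : Icc x t ⊆ Icc x y := Icc_subset_Icc_right ht.2
  obtain ⟨η, hη, hslope⟩ :=
    exists_mem_Icc_sub_eq_mul ht.1 fun s hs => (hf s (hsub hs)).mono hsub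
  have hfactor : f x + f' ξ * (t - x) - f t = (f' ξ - f' η) * (t - x) := by
    linear_combination -hslope
  rw [hfactor, abs_mul, abs_of_nonneg (sub_nonneg.mpr ht.1)]
  exact mul_le_mul_of_nonneg_right (hf'.dist_le hξ (hsub hη)) (sub_nonneg.mpr ht.1)

theorem fourierChar_sub_integral_linear {m : ℝ} (hm : |m| < 1) (x y : ℝ) :
    (𝐞 y : ℂ) - ∫ t in x..(x + 1), (𝐞 (y + m * (t - x)) : ℂ) =
      phaseCoeff m * (𝐞 (y + m) - 𝐞 y) := by
  have hint : ∫ t in x..(x + 1), (𝐞 (y + m * (t - x)) : ℂ) =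
      𝐞 y * ∫ s in (0 : ℝ)..1, (𝐞 (m * s) : ℂ) := by
    simp only [AddChar.map_add_eq_mul, Circle.coe_mul, intervalIntegral.integral_const_mul]
    rw [intervalIntegral.integral_comp_sub_right (fun s => (𝐞 (m * s) : ℂ)) x, sub_self,
      add_sub_cancel_left]
  rw [hint, AddChar.map_add_eq_mul, Circle.coe_mul]
  linear_combination (𝐞 y : ℂ) * one_sub_integral_fourierChar_mul hm

theorem norm_integral_le_of_le_add_one {E : Type*} [NormedAddCommGroup E] [NormedSpace ℝ E]
    {F : ℝ → E} {c d M : ℝ} (hcd : c ≤ d) (hd : d ≤ c + 1) (hF : ∀ t ∈ Icc c d, ‖F t‖ ≤ M) :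
    ‖∫ t in c..d, F t‖ ≤ M := by
  have hM : 0 ≤ M := (norm_nonneg _).trans (hF c (left_mem_Icc.mpr hcd))
  have hconst : ∀ t ∈ uIoc c d, ‖F t‖ ≤ M := by
    rw [uIoc_of_le hcd]
    exact fun t ht => hF t (Ioc_subset_Icc_self ht)
  refine (intervalIntegral.norm_integral_le_of_norm_le_const hconst).trans ?_
  rw [abs_of_nonneg (sub_nonneg.mpr hcd)]
  exact mul_le_of_le_one_right hM (by linarith)

theorem norm_mul_fourierChar_sub_integral_sub_le {f f' : ℝ → ℝ} {g : ℝ → ℂ} {x ξ : ℝ}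
    (hf : ∀ t ∈ Icc x (x + 1), HasDerivWithinAt f (f' t) (Icc x (x + 1)) t)
    (hf' : BoundedVariationOn f' (Icc x (x + 1))) (hg : BoundedVariationOn g (Icc x (x + 1)))
    (hξ : ξ ∈ Icc x (x + 1)) (hslope : f (x + 1) - f x = f' ξ) (hξ1 : |f' ξ| < 1) :
    ‖g x * 𝐞 (f x) - (∫ t in x..(x + 1), g t * 𝐞 (f t)) -
        g x * phaseCoeff (f' ξ) * (𝐞 (f (x + 1)) - 𝐞 (f x))‖ ≤
      (eVariationOn g (Icc x (x + 1))).toReal +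
        2 * π * ‖g x‖ * (eVariationOn f' (Icc x (x + 1))).toReal := by
  have hxx : x ≤ x + 1 := by linarith
  set ℓ : ℝ → ℝ := fun t => f x + f' ξ * (t - x)
  have hℓ : Continuous ℓ := by fun_prop
  have hℓint : IntervalIntegrable (fun t => g x * (𝐞 (ℓ t) : ℂ)) volume x (x + 1) :=
    ((continuous_coe_fourierChar.comp hℓ).const_mul (g x)).intervalIntegrable _ _
  have hfint := intervalIntegrable_mul_fourierChar hxx hg fun t ht => (hf t ht).continuousWithinAt
  have hlin := fourierChar_sub_integral_linear hξ1 x (f x)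
  have hdiff : g x * 𝐞 (f x) - (∫ t in x..(x + 1), g t * 𝐞 (f t)) -
      g x * phaseCoeff (f' ξ) * (𝐞 (f (x + 1)) - 𝐞 (f x)) =
        ∫ t in x..(x + 1), (g x * 𝐞 (ℓ t) - g t * 𝐞 (f t)) := by
    rw [intervalIntegral.integral_sub hℓint hfint, intervalIntegral.integral_const_mul,
      ← sub_add_cancel (f (x + 1)) (f x), hslope, add_comm (f' ξ)]
    linear_combination g x * hlin
  rw [hdiff]
  refine norm_integral_le_of_le_add_one hxx le_rfl fun t ht => ?_
  refine (norm_mul_fourierChar_sub_le _ _ _ _).trans ?_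
  rw [← dist_eq_norm]
  gcongr
  · exact hg.dist_le (left_mem_Icc.mpr hxx) ht
  · exact (abs_linearization_sub_le hf hf' hξ ht).trans
      (mul_le_of_le_one_right ENNReal.toReal_nonneg (by linarith [ht.2]))

theorem Icc_add_natCast_subset {x : ℝ} {k n : ℕ} (hk : k < n) :
    Icc (x + k) (x + k + 1) ⊆ Icc x (x + n) := by
  have hkn : (k : ℝ) + 1 ≤ n := by exact_mod_cast hk
  exact Icc_subset_Icc (by simp) (by linarith)

theorem exists_monotoneOn_seq_sub_eq_deriv {f f' : ℝ → ℝ} {x : ℝ} {n : ℕ}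
    (hf : ∀ t ∈ Icc x (x + n), HasDerivWithinAt f (f' t) (Icc x (x + n)) t) :
    ∃ ξ : ℕ → ℝ, MonotoneOn ξ (Iio n) ∧ (∀ k < n, ξ k ∈ Icc (x + k) (x + k + 1)) ∧
      ∀ k < n, f (x + k + 1) - f (x + k) = f' (ξ k) := by
  have hunit (k : ℕ) (hk : k < n) :
      ∃ ξ ∈ Icc (x + k) (x + k + 1), f (x + k + 1) - f (x + k) = f' ξ := by
    have hsub := Icc_add_natCast_subset (x := x) hk
    obtain ⟨ξ, hξ, hslope⟩ := exists_mem_Icc_sub_eq_mul (by linarith)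
      fun t ht => (hf t (hsub ht)).mono hsub
    exact ⟨ξ, hξ, by rw [hslope, add_sub_cancel_left, mul_one]⟩
  choose! ξ hξ hslope using hunit
  refine ⟨ξ, monotoneOn_of_le_succ ordConnected_Iio fun k _ hk hk' => ?_, hξ, hslope⟩
  have hright := (hξ k hk).2
  have hleft := (hξ (k + 1) hk').1
  rw [Nat.cast_succ, ← add_assoc] at hleft
  exact hright.trans hleft

theorem norm_sum_mul_fourierChar_sub_integral_sub_le {f f' : ℝ → ℝ} {g : ℝ → ℂ} {x M : ℝ} {n : ℕ}
    {ξ : ℕ → ℝ}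
    (hf : ∀ t ∈ Icc x (x + n), HasDerivWithinAt f (f' t) (Icc x (x + n)) t)
    (hf' : BoundedVariationOn f' (Icc x (x + n))) (hg : BoundedVariationOn g (Icc x (x + n)))
    (hgM : ∀ t ∈ Icc x (x + n), ‖g t‖ ≤ M) (hξ : ∀ k < n, ξ k ∈ Icc (x + k) (x + k + 1))
    (hslope : ∀ k < n, f (x + k + 1) - f (x + k) = f' (ξ k)) (hξ1 : ∀ k < n, |f' (ξ k)| < 1) :
    ‖(∑ k ∈ Finset.range n, g (x + k) * 𝐞 (f (x + k))) - (∫ t in x..(x + n), g t * 𝐞 (f t)) -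
        ∑ k ∈ Finset.range n,
          g (x + k) * phaseCoeff (f' (ξ k)) * (𝐞 (f (x + k + 1)) - 𝐞 (f (x + k)))‖ ≤
      (eVariationOn g (Icc x (x + n))).toReal +
        2 * π * M * (eVariationOn f' (Icc x (x + n))).toReal := by
  have hint : ∫ t in x..(x + n), g t * 𝐞 (f t) =
      ∑ k ∈ Finset.range n, ∫ t in (x + k)..(x + k + 1), g t * 𝐞 (f t) := by
    have hsum := intervalIntegral.sum_integral_adjacent_intervals (n := n) (μ := volume)
      (f := fun t => g t * (𝐞 (f t) : ℂ)) (a := fun k : ℕ => x + k) fun k hk => by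
        have hsub := Icc_add_natCast_subset (x := x) hk
        push_cast [← add_assoc]
        exact intervalIntegrable_mul_fourierChar (by linarith) (hg.mono hsub)
          fun t ht => ((hf t (hsub ht)).mono hsub).continuousWithinAt
    simpa [add_assoc] using hsum.symm
  rw [hint, ← Finset.sum_sub_distrib, ← Finset.sum_sub_distrib,
    ← sum_toReal_eVariationOn_Icc_add_natCast hg, ← sum_toReal_eVariationOn_Icc_add_natCast hf',
    Finset.mul_sum, ← Finset.sum_add_distrib]
  refine norm_sum_le_of_le _ fun k hk => ?_
  have hkn := Finset.mem_range.mp hk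
  have hsub := Icc_add_natCast_subset (x := x) hkn
  have hgk : ‖g (x + k)‖ ≤ M := hgM _ (hsub (left_mem_Icc.mpr (by linarith)))
  refine (norm_mul_fourierChar_sub_integral_sub_le (fun t ht => (hf t (hsub ht)).mono hsub)
    (hf'.mono hsub) (hg.mono hsub) (hξ k hkn) (hslope k hkn) (hξ1 k hkn)).trans ?_
  gcongr

theorem norm_sum_mul_phaseCoeff_mul_sub_le {h : ℝ → ℝ} {g : ℝ → ℂ} {a b θ M : ℝ} {n : ℕ}
    {u ξ : ℕ → ℝ} {w : ℕ → ℂ} (hh : MonotoneOn h (Icc a b) ∨ AntitoneOn h (Icc a b)) (hθ : θ < 1)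
    (hhθ : ∀ t ∈ Icc a b, |h t| ≤ θ) (hg : BoundedVariationOn g (Icc a b))
    (hgM : ∀ t ∈ Icc a b, ‖g t‖ ≤ M) (hu : MonotoneOn u (Iic n)) (hξ : MonotoneOn ξ (Iic n))
    (hus : ∀ k ≤ n, u k ∈ Icc a b) (hξs : ∀ k ≤ n, ξ k ∈ Icc a b) (hw : ∀ k, ‖w k‖ ≤ 1) :
    ‖∑ k ∈ Finset.range (n + 1), g (u k) * phaseCoeff (h (ξ k)) * (w (k + 1) - w k)‖ ≤
      (4 * M + 2 * (eVariationOn g (Icc a b)).toReal) / (1 - θ) := by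
  have hM : 0 ≤ M := (norm_nonneg _).trans (hgM _ (hus n le_rfl))
  have : 0 < 1 - θ := sub_pos.mpr hθ
  have hgu (k : ℕ) (hk : k ≤ n) : ‖g (u k)‖ ≤ M := hgM _ (hus k hk)
  have hphase (k : ℕ) (hk : k ≤ n) : ‖phaseCoeff (h (ξ k))‖ ≤ 1 / (1 - θ) :=
    norm_phaseCoeff_le hθ (hhθ _ (hξs k hk))
  have hgvar := sum_dist_le_toReal_eVariationOn hg hu hus
  simp only [dist_eq_norm] at hgvar
  have habel := norm_sum_smul_sub_le (u := fun k => g (u k) * phaseCoeff (h (ξ k))) n hw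
  simp only [smul_eq_mul] at habel
  calc ‖∑ k ∈ Finset.range (n + 1), g (u k) * phaseCoeff (h (ξ k)) * (w (k + 1) - w k)‖
      ≤ 2 * 1 * (‖g (u n) * phaseCoeff (h (ξ n))‖ + ∑ k ∈ Finset.range n,
          ‖g (u (k + 1)) * phaseCoeff (h (ξ (k + 1))) - g (u k) * phaseCoeff (h (ξ k))‖) :=
        habel
    _ ≤ 2 * 1 * (M * (1 / (1 - θ)) +
          (M * (1 / (1 - θ)) + 1 / (1 - θ) * (eVariationOn g (Icc a b)).toReal)) := by
        gcongr
        · exact norm_mul_le_of_le (hgu n le_rfl) (hphase n le_rfl)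
        · refine (sum_norm_mul_sub_le hgu hphase).trans ?_
          gcongr
          exact sum_norm_phaseCoeff_sub_le hh hθ hhθ hξ hξs
    _ = (4 * M + 2 * (eVariationOn g (Icc a b)).toReal) / (1 - θ) := by ring

theorem norm_sum_mul_fourierChar_sub_integral_le {f f' : ℝ → ℝ} {g : ℝ → ℂ} {x θ M : ℝ} {n : ℕ}
    (hf : ∀ t ∈ Icc x (x + n), HasDerivWithinAt f (f' t) (Icc x (x + n)) t)
    (hf' : MonotoneOn f' (Icc x (x + n)) ∨ AntitoneOn f' (Icc x (x + n))) (hθ : θ < 1)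
    (hf'θ : ∀ t ∈ Icc x (x + n), |f' t| ≤ θ) (hg : BoundedVariationOn g (Icc x (x + n)))
    (hgM : ∀ t ∈ Icc x (x + n), ‖g t‖ ≤ M) :
    ‖(∑ k ∈ Finset.range n, g (x + k) * 𝐞 (f (x + k))) - ∫ t in x..(x + n), g t * 𝐞 (f t)‖ ≤
      (17 * M + 3 * (eVariationOn g (Icc x (x + n))).toReal) / (1 - θ) := by
  have hx : x ∈ Icc x (x + n) := left_mem_Icc.mpr (by simp)
  have hM : 0 ≤ M := (norm_nonneg _).trans (hgM x hx)
  have hθ0 : 0 ≤ θ := (abs_nonneg _).trans (hf'θ x hx)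
  have hθ1 : 0 < 1 - θ := sub_pos.mpr hθ
  rcases n with _ | n
  · rw [Finset.sum_range_zero, Nat.cast_zero, add_zero, intervalIntegral.integral_same, sub_zero,
      norm_zero]
    positivity
  obtain ⟨ξ, hξmono, hξ, hslope⟩ := exists_monotoneOn_seq_sub_eq_deriv hf
  have hξs (k : ℕ) (hk : k ≤ n) : ξ k ∈ Icc x (x + (n + 1 : ℕ)) :=
    Icc_add_natCast_subset (by lia) (hξ k (by lia))
  have hvar := eVariationOn_Icc_le_of_abs_le hf' hf'θ
  have hvarθ := ENNReal.toReal_le_of_le_ofReal (by positivity) hvar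
  have hremainder := norm_sum_mul_fourierChar_sub_integral_sub_le hf
    (ne_top_of_le_ne_top ENNReal.ofReal_ne_top hvar) hg hgM hξ hslope
    fun k hk => (hf'θ _ (hξs k (Nat.le_of_lt_succ hk))).trans_lt hθ
  have habel := norm_sum_mul_phaseCoeff_mul_sub_le (n := n) (u := fun k => x + k)
    (w := fun k => 𝐞 (f (x + k))) hf' hθ hf'θ hg hgM
    ((Nat.mono_cast.const_add x).monotoneOn _)
    (hξmono.mono fun k hk => Nat.lt_succ_of_le hk)
    (fun k hk => Icc_add_natCast_subset (Nat.lt_succ_of_le hk) (left_mem_Icc.mpr (by linarith)))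
    hξs fun k => (Circle.norm_coe _).le
  push_cast [← add_assoc] at habel hremainder hvarθ ⊢
  set V := (eVariationOn g (Icc x (x + n + 1))).toReal
  have hV : 0 ≤ V := ENNReal.toReal_nonneg
  refine (norm_le_norm_add_norm_sub' _ _).trans <| (add_le_add habel hremainder).trans ?_
  calc (4 * M + 2 * V) / (1 - θ) + (V + 2 * π * M * (eVariationOn f' (Icc x (x + n + 1))).toReal)
      ≤ (4 * M + 2 * V) / (1 - θ) + (V + 2 * 3.15 * M * (2 * θ)) := by
        gcongr
        exact pi_lt_d2.le
    _ ≤ (4 * M + 2 * V) / (1 - θ) + (13 * M + V) / (1 - θ) := by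
        gcongr
        rw [le_div_iff₀ hθ1]
        nlinarith [mul_nonneg hM hθ1.le, mul_nonneg hV hθ0, mul_nonneg (mul_nonneg hM hθ0) hθ0]
    _ = (17 * M + 3 * V) / (1 - θ) := by ring

/-! ### Real endpoints -/

section Endpoints

theorem sum_int_Ioc_eq_sum_range {E : Type*} [AddCommMonoid E] (F : ℝ → E) (m : ℤ) (K : ℕ) :
    ∑ n ∈ Finset.Ioc m (m + K), F n = ∑ k ∈ Finset.range K, F (m + 1 + k) := by
  simp [Int.Ioc_eq_finset_map]

variable {E : Type*} [NormedAddCommGroup E] [NormedSpace ℝ E] {F : ℝ → E} {a b B M : ℝ}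

theorem sum_int_Ioc_sub_integral_eq {m : ℤ} {K : ℕ} (hF : IntervalIntegrable F volume a b)
    (ha : a ≤ m + 1) (hb : m + 1 + K ≤ b) :
    (∑ n ∈ Finset.Ioc m (m + 1 + K), F n) - ∫ t in a..b, F t =
      ((∑ k ∈ Finset.range K, F (m + 1 + k)) - ∫ t in (m + 1)..(m + 1 + K), F t) +
        F (m + 1 + K) - (∫ t in a..(m + 1), F t) - ∫ t in (m + 1 + K)..b, F t := by
  have : (0 : ℝ) ≤ K := K.cast_nonneg
  have hsum : ∑ n ∈ Finset.Ioc m (m + 1 + K), F n =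
      (∑ k ∈ Finset.range K, F (m + 1 + k)) + F (m + 1 + K) := by
    rw [← Finset.sum_range_succ (fun k : ℕ => F (m + 1 + k)), ← sum_int_Ioc_eq_sum_range,
      Nat.cast_succ, add_right_comm, add_assoc]
  have hint {c d : ℝ} (hc : c ∈ Icc a b) (hd : d ∈ Icc a b) : IntervalIntegrable F volume c d :=
    hF.mono_set (uIcc_subset_uIcc (Icc_subset_uIcc hc) (Icc_subset_uIcc hd))
  have hleft : a ∈ Icc a b := ⟨le_rfl, by linarith⟩
  have hright : b ∈ Icc a b := ⟨by linarith, le_rfl⟩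
  have hfirst : (m : ℝ) + 1 ∈ Icc a b := ⟨ha, by linarith⟩
  have hlast : (m : ℝ) + 1 + K ∈ Icc a b := ⟨by linarith, hb⟩
  rw [hsum, ← intervalIntegral.integral_add_adjacent_intervals (hint hleft hfirst)
      (hint hfirst hright),
    ← intervalIntegral.integral_add_adjacent_intervals (hint hfirst hlast) (hint hlast hright)]
  abel

theorem norm_sum_Ioc_floor_sub_integral_le (hab : a ≤ b) (hFM : ∀ t ∈ Icc a b, ‖F t‖ ≤ M)
    (hF : IntervalIntegrable F volume a b)
    (hB : ∀ (x : ℝ) (K : ℕ), a ≤ x → x + K ≤ b →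
      ‖(∑ k ∈ Finset.range K, F (x + k)) - ∫ t in x..(x + K), F t‖ ≤ B) :
    ‖(∑ n ∈ Finset.Ioc ⌊a⌋ ⌊b⌋, F n) - ∫ t in a..b, F t‖ ≤ B + 3 * M := by
  have hB0 : 0 ≤ B := by simpa using hB a 0 le_rfl (by simpa using hab)
  have hM : 0 ≤ M := (norm_nonneg _).trans (hFM a (left_mem_Icc.mpr hab))
  have hshort {c d : ℝ} (hac : a ≤ c) (hcd : c ≤ d) (hdb : d ≤ b) (hd : d ≤ c + 1) :
      ‖∫ t in c..d, F t‖ ≤ M :=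
    norm_integral_le_of_le_add_one hcd hd fun t ht => hFM t (Icc_subset_Icc hac hdb ht)
  have ha := Int.floor_le a
  have ha' := (Int.lt_floor_add_one a).le
  have hb := Int.floor_le b
  have hb' := (Int.lt_floor_add_one b).le
  rcases (Int.floor_mono hab).eq_or_lt with heq | hlt
  · rw [heq, Finset.Ioc_self, Finset.sum_empty, zero_sub, norm_neg]
    rw [heq] at ha
    linarith [hshort le_rfl hab le_rfl (by linarith)]
  obtain ⟨K, hK⟩ := Int.le.dest (Int.add_one_le_iff.mpr hlt)
  have hKb : (⌊a⌋ : ℝ) + 1 + K = ⌊b⌋ := by exact_mod_cast hK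
  have : (0 : ℝ) ≤ K := K.cast_nonneg
  have hlast : (⌊a⌋ : ℝ) + 1 + K ≤ b := by linarith
  rw [← hK, sum_int_Ioc_sub_integral_eq hF ha' hlast]
  refine (norm_sub_le_of_le (norm_sub_le_of_le
    (norm_add_le_of_le (hB _ K ha' hlast) (hFM _ ⟨by linarith, hlast⟩))
    (hshort le_rfl ha' (by linarith) (by linarith)))
    (hshort (by linarith) hlast le_rfl (by linarith))).trans_eq ?_
  ring

end Endpoints

theorem sum_eq_integral_of_small_derivative_general {a b θ M : ℝ} {f f' : ℝ → ℝ} {g : ℝ → ℂ}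
    (hab : a ≤ b) (hf : ∀ t ∈ Icc a b, HasDerivWithinAt f (f' t) (Icc a b) t)
    (hf' : MonotoneOn f' (Icc a b) ∨ AntitoneOn f' (Icc a b)) (hθ : θ < 1)
    (hf'θ : ∀ t ∈ Icc a b, |f' t| ≤ θ) (hg : BoundedVariationOn g (Icc a b))
    (hgM : ∀ t ∈ Icc a b, ‖g t‖ ≤ M) :
    ‖(∑ n ∈ Finset.Ioc ⌊a⌋ ⌊b⌋, g n * 𝐞 (f n)) - ∫ t in a..b, g t * 𝐞 (f t)‖ ≤
      (20 * M + 3 * (eVariationOn g (Icc a b)).toReal) / (1 - θ) := by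
  have ha := left_mem_Icc.mpr hab
  have hM : 0 ≤ M := (norm_nonneg _).trans (hgM a ha)
  have hθ0 : 0 ≤ θ := (abs_nonneg _).trans (hf'θ a ha)
  have hθ1 : 0 < 1 - θ := sub_pos.mpr hθ
  have hbound : ∀ t ∈ Icc a b, ‖g t * 𝐞 (f t)‖ ≤ M := fun t ht => by
    rw [norm_mul, Circle.norm_coe, mul_one]; exact hgM t ht
  have hinterior (x : ℝ) (K : ℕ) (hax : a ≤ x) (hxb : x + K ≤ b) :
      ‖(∑ k ∈ Finset.range K, g (x + k) * 𝐞 (f (x + k))) - ∫ t in x..(x + K), g t * 𝐞 (f t)‖ ≤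
        (17 * M + 3 * (eVariationOn g (Icc a b)).toReal) / (1 - θ) := by
    have hsub : Icc x (x + K) ⊆ Icc a b := Icc_subset_Icc hax hxb
    refine (norm_sum_mul_fourierChar_sub_integral_le (fun t ht => (hf t (hsub ht)).mono hsub)
      (hf'.imp (·.mono hsub) (·.mono hsub)) hθ (fun t ht => hf'θ t (hsub ht)) (hg.mono hsub)
      (fun t ht => hgM t (hsub ht))).trans ?_
    gcongr
    exact eVariationOn.mono g hsub
  have hMθ : M ≤ M / (1 - θ) := le_div_self hM hθ1 (by linarith)
  refine (norm_sum_Ioc_floor_sub_integral_le hab hbound (intervalIntegrable_mul_fourierChar hab hg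
    fun t ht => (hf t ht).continuousWithinAt) hinterior).trans ?_
  calc (17 * M + 3 * (eVariationOn g (Icc a b)).toReal) / (1 - θ) + 3 * M
      ≤ (17 * M + 3 * (eVariationOn g (Icc a b)).toReal) / (1 - θ) + 3 * (M / (1 - θ)) := by gcongr
    _ = (20 * M + 3 * (eVariationOn g (Icc a b)).toReal) / (1 - θ) := by ring

end

/-- Truncated Poisson summation (Titchmarsh, Lemma 4.8): under the stated
monotonicity and derivative conditions, the exponential sum is approximated
by the corresponding integral with error `O(1/(1-θ))`. -/
theorem sum_eq_integral_of_small_derivative :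
    ∃ C : ℝ, 0 < C ∧
      ∀ (a b θ : ℝ) (f g f' g' : ℝ → ℝ),
        a ≤ b →
        (∀ t ∈ Set.Icc a b, HasDerivAt f (f' t) t) →
        (∀ t ∈ Set.Icc a b, HasDerivAt g (g' t) t) →
        (MonotoneOn f (Set.Icc a b) ∨ AntitoneOn f (Set.Icc a b)) →
        (MonotoneOn g (Set.Icc a b) ∨ AntitoneOn g (Set.Icc a b)) →
        (MonotoneOn f' (Set.Icc a b) ∨ AntitoneOn f' (Set.Icc a b)) →
        θ < 1 →
        (∀ t ∈ Set.Icc a b, |f' t| ≤ θ) →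
        (∀ t ∈ Set.Icc a b, |g t| ≤ 1) →
        (∀ t ∈ Set.Icc a b, |g' t| ≤ 1) →
        ‖(∑ n ∈ Finset.Ioc ⌊a⌋ ⌊b⌋,
              (g n : ℂ) * Complex.exp (2 * Real.pi * Complex.I * f n)) -
            ∫ t in a..b, (g t : ℂ) * Complex.exp (2 * Real.pi * Complex.I * f t)‖
          ≤ C / (1 - θ) := by
  refine ⟨26, by norm_num, fun a b θ f g f' _ hab hf _ _ hg hf' hθ hf'θ hg1 _ => ?_⟩
  have hvar : eVariationOn (fun t => (g t : ℂ)) (Set.Icc a b) ≤ ENNReal.ofReal (2 * 1) :=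
    (eVariationOn_ofReal_comp g _).trans_le (eVariationOn_Icc_le_of_abs_le hg hg1)
  have hvar2 := ENNReal.toReal_le_of_le_ofReal (by norm_num) hvar
  have : 0 < 1 - θ := sub_pos.mpr hθ
  simp only [← fourierChar_eq_exp]
  refine (sum_eq_integral_of_small_derivative_general (M := 1) hab
    (fun t ht => (hf t ht).hasDerivWithinAt) hf' hθ hf'θ
    (ne_top_of_le_ne_top ENNReal.ofReal_ne_top hvar)
    fun t ht => (Complex.norm_real _).trans_le (hg1 t ht)).trans ?_
  gcongr
  linarith
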